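/- For n ≥ 3, the center of the braid group B_n is the subgroup generated by the full twist (σ_1 σ_2 ⋯ σ_{n−1})^n, and this subgroup is infinite cyclic. -/

import Mathlib

/-- The braid relations on generators `σ_1, …, σ_{n-1}` (generator `i : Fin (n-1)`
corresponds to `σ_{i+1}`): `σ_i σ_{i+1} σ_i = σ_{i+1} σ_i σ_{i+1}` and
`σ_i σ_j = σ_j σ_i` for `|i - j| ≥ 2`. -/
def braidRels (n : ℕ) : Set (FreeGroup (Fin (n - 1))) :=
  { r | (∃ i j : Fin (n - 1), (i : ℕ) + 1 = (j : ℕ) ∧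
          r = FreeGroup.of i * FreeGroup.of j * FreeGroup.of i *
              (FreeGroup.of j * FreeGroup.of i * FreeGroup.of j)⁻¹) ∨
        (∃ i j : Fin (n - 1), (i : ℕ) + 2 ≤ (j : ℕ) ∧
          r = FreeGroup.of i * FreeGroup.of j * (FreeGroup.of j * FreeGroup.of i)⁻¹) }

/-- The braid group `B_n`, presented on `σ_1, …, σ_{n-1}` with the braid relations. -/
abbrev BraidGroup (n : ℕ) := PresentedGroup (braidRels n)

/-- The braid generator `σ_k` (`1 ≤ k ≤ n-1`, 1-based); junk value `1` out of range. -/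
def braidSigma (n k : ℕ) : BraidGroup n :=
  if h : k - 1 < n - 1 then PresentedGroup.of (⟨k - 1, h⟩ : Fin (n - 1)) else 1

/-- The pure braid generator
`a_{ij} = (σ_{j-1} σ_{j-2} ⋯ σ_{i+1}) σ_i² (σ_{j-1} σ_{j-2} ⋯ σ_{i+1})⁻¹`. -/
def braidA (n i j : ℕ) : BraidGroup n :=
  ((List.range (j - 1 - i)).map (fun t => braidSigma n (j - 1 - t))).prod *
    (braidSigma n i) ^ 2 *
    (((List.range (j - 1 - i)).map (fun t => braidSigma n (j - 1 - t))).prod)⁻¹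

namespace BraidCenter

/-- adjacency of generators -/
def Adj {N : ℕ} (a b : Fin N) : Prop := (a : ℕ) + 1 = b ∨ (b : ℕ) + 1 = a
/-- commuting distinct generators -/
def Far {N : ℕ} (a b : Fin N) : Prop := (a : ℕ) + 2 ≤ b ∨ (b : ℕ) + 2 ≤ a

theorem Adj.symm {N : ℕ} {a b : Fin N} (h : Adj a b) : Adj b a := Or.symm h
theorem Far.symm {N : ℕ} {a b : Fin N} (h : Far a b) : Far b a := Or.symm h

theorem trichotomy {N : ℕ} (a b : Fin N) : a = b ∨ Adj a b ∨ Far a b := by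
  unfold Adj Far
  rw [Fin.ext_iff]; omega

theorem Adj.ne {N : ℕ} {a b : Fin N} (h : Adj a b) : a ≠ b := by
  rintro rfl; unfold Adj at h; omega
theorem Far.ne {N : ℕ} {a b : Fin N} (h : Far a b) : a ≠ b := by
  rintro rfl; unfold Far at h; omega
theorem Far.not_adj {N : ℕ} {a b : Fin N} (h : Far a b) : ¬ Adj a b := by
  unfold Far at h; unfold Adj; omega

/-- The lcm condition. -/
def Good {N : ℕ} {M : Type*} [Monoid M] (s : Fin N → M) (a b : Fin N) (u v : M) : Prop :=
  (a = b → u = v) ∧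
  (Adj a b → ∃ w, u = s b * (s a * w) ∧ v = s a * (s b * w)) ∧
  (Far a b → ∃ w, u = s b * w ∧ v = s a * w)

section
variable {N : ℕ} {M : Type*} [Monoid M] {s : Fin N → M}

theorem Good.symm {a b : Fin N} {u v : M} (h : Good s a b u v) : Good s b a v u := by
  obtain ⟨h1, h2, h3⟩ := h
  refine ⟨fun e => (h1 e.symm).symm, fun e => ?_, fun e => ?_⟩
  · obtain ⟨w, hu, hv⟩ := h2 e.symm; exact ⟨w, hv, hu⟩
  · obtain ⟨w, hu, hv⟩ := h3 e.symm; exact ⟨w, hv, hu⟩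

theorem Good.of_eq {a : Fin N} {u v : M} (h : u = v) : Good s a a u v :=
  ⟨fun _ => h, fun e => absurd rfl e.ne, fun e => absurd rfl e.ne⟩
theorem Good.of_adj {a b : Fin N} {u v w : M} (h : Adj a b)
    (hu : u = s b * (s a * w)) (hv : v = s a * (s b * w)) : Good s a b u v :=
  ⟨fun e => absurd e h.ne, fun _ => ⟨w, hu, hv⟩, fun e => absurd h e.not_adj⟩
theorem Good.of_far {a b : Fin N} {u v w : M} (h : Far a b)
    (hu : u = s b * w) (hv : v = s a * w) : Good s a b u v :=
  ⟨fun e => absurd e h.ne, fun e => absurd e h.not_adj, fun _ => ⟨w, hu, hv⟩⟩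

theorem Good.trans (hA : ∀ a b, Adj a b → ∀ x, s a * (s b * (s a * x)) = s b * (s a * (s b * x)))
    (hF : ∀ a b, Far a b → ∀ x, s a * (s b * x) = s b * (s a * x))
    (l : M → ℕ) (hl : ∀ a x, l (s a * x) = l x + 1) (L : ℕ)
    (hP : ∀ a b u v, l u < L → s a * u = s b * v → Good s a b u v)
    {a b c : Fin N} {u v w : M} (hu : l v = L)
    (h1 : Good s a b u v) (h2 : Good s b c v w) : Good s a c u w := by
  rcases trichotomy a b with rfl | hab | hab
  · rw [h1.1 rfl]; exact h2
  all_goals rcases trichotomy b c with rfl | hbc | hbc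
  · rw [← h2.1 rfl]; exact h1
  -- adjacent, adjacent
  · obtain ⟨x, rfl, hx⟩ := h1.2.1 hab
    obtain ⟨y, hy, rfl⟩ := h2.2.1 hbc
    rw [hx, hl, hl] at hu
    rw [hx] at hy
    rcases trichotomy a c with rfl | hac | hac
    · have := (hP _ _ _ _ (by rw [hl]; omega) hy).1 rfl
      have := (hP _ _ _ _ (by omega) this).1 rfl
      exact Good.of_eq (by rw [this])
    · exfalso; unfold Adj at *; omega
    · obtain ⟨p, hp1, hp2⟩ := (hP _ _ _ _ (by rw [hl]; omega) hy).2.2 hac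
      have k1 := congrArg l hp1
      have k2 := congrArg l hy
      simp only [hl] at k1 k2
      obtain ⟨q, rfl, hq2⟩ := (hP _ _ _ _ (by omega) hp1).2.1 hbc
      obtain ⟨r, rfl, hr2⟩ := (hP _ _ _ _ (by simp only [hl] at *; omega) hp2).2.1 hab.symm
      rw [hq2] at hr2
      have k3 := congrArg l hq2
      simp only [hl] at k1 k2 k3
      have h5 := (hP _ _ _ _ (by simp only [hl] at *; omega) hr2).1 rfl
      obtain ⟨z, rfl, rfl⟩ := (hP _ _ _ _ (by simp only [hl] at *; omega) h5).2.2 hac.symm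
      refine Good.of_far (w := s b * (s c * (s a * (s b * z)))) hac ?_ ?_
      · rw [hF a c hac, hA a b hab, hA b c hbc]
      · rw [hF c a hac.symm, hA c b hbc.symm, hA b a hab.symm, hF a c hac]
  -- adjacent, far
  · obtain ⟨x, rfl, hx⟩ := h1.2.1 hab
    obtain ⟨y, hy, rfl⟩ := h2.2.2 hbc
    rw [hx, hl, hl] at hu
    rw [hx] at hy
    rcases trichotomy a c with rfl | hac | hac
    · exact absurd hab.symm hbc.not_adj
    · obtain ⟨z, hz1, rfl⟩ := (hP _ _ _ _ (by rw [hl]; omega) hy).2.1 hac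
      obtain ⟨t, rfl, ht⟩ := (hP _ _ _ _ (by omega) hz1).2.2 hbc
      have k1 := congrArg l hz1
      simp only [hl] at k1 hu
      obtain ⟨q, rfl, rfl⟩ := (hP _ _ _ _ (by omega) ht).2.1 hab
      refine Good.of_adj (w := s b * (s a * (s c * q))) hac ?_ ?_
      · rw [hA a c hac, hF b c hbc, hF c b hbc.symm q, hA b a hab.symm]
      · rw [hF c b hbc.symm (s a * q), hA b a hab.symm (s c * (s a * q)), hA a c hac q, hF b c hbc]
    · obtain ⟨z, hz1, rfl⟩ := (hP _ _ _ _ (by rw [hl]; omega) hy).2.2 hac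
      obtain ⟨t, rfl, rfl⟩ := (hP _ _ _ _ (by omega) hz1).2.2 hbc
      refine Good.of_far (w := s b * (s a * t)) hac ?_ ?_
      · rw [hF a c hac, hF b c hbc]
      · rw [hA b a hab.symm]
  · rw [← h2.1 rfl]; exact h1
  -- far, adjacent
  · obtain ⟨x, rfl, hx⟩ := h1.2.2 hab
    obtain ⟨y, hy, rfl⟩ := h2.2.1 hbc
    have hu' := hu
    rw [hx, hl] at hu
    rw [hy, hl, hl] at hu'
    rw [hx] at hy
    replace hy := hy.symm
    rcases trichotomy a c with rfl | hac | hac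
    · exact absurd hbc.symm hab.not_adj
    · obtain ⟨z, hz1, rfl⟩ := (hP _ _ _ _ (by rw [hl]; omega) hy).2.1 hac.symm
      obtain ⟨t, rfl, ht⟩ := (hP _ _ _ _ (by omega) hz1).2.2 hab.symm
      have k1 := congrArg l hz1
      simp only [hl] at k1 hu'
      obtain ⟨q, rfl, rfl⟩ := (hP _ _ _ _ (by omega) ht).2.1 hbc.symm
      refine Good.of_adj (w := s b * (s c * (s a * q))) hac ?_ ?_
      · rw [hF a b hab (s c * q), hA b c hbc (s a * (s c * q)), hA c a hac.symm q, hF b a hab.symm]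
      · rw [hA c a hac.symm, hF b a hab.symm, hF a b hab q, hA b c hbc]
    · obtain ⟨z, hz1, rfl⟩ := (hP _ _ _ _ (by rw [hl]; omega) hy).2.2 hac.symm
      obtain ⟨t, rfl, rfl⟩ := (hP _ _ _ _ (by omega) hz1).2.2 hab.symm
      refine Good.of_far (w := s b * (s c * t)) hac ?_ ?_
      · rw [hA b c hbc]
      · rw [hF c a hac.symm, hF b a hab.symm]
  -- far, far
  · obtain ⟨x, rfl, hx⟩ := h1.2.2 hab
    obtain ⟨y, hy, rfl⟩ := h2.2.2 hbc
    rw [hx, hl] at hu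
    rw [hx] at hy
    rcases trichotomy a c with rfl | hac | hac
    · exact Good.of_eq (by rw [(hP _ _ _ _ (by omega) hy).1 rfl])
    · obtain ⟨z, rfl, rfl⟩ := (hP _ _ _ _ (by omega) hy).2.1 hac
      refine Good.of_adj (w := s b * z) hac ?_ ?_
      · rw [hF b c hbc, hF b a hab.symm]
      · rw [hF b a hab.symm, hF b c hbc]
    · obtain ⟨z, rfl, rfl⟩ := (hP _ _ _ _ (by omega) hy).2.2 hac
      refine Good.of_far (w := s b * z) hac ?_ ?_
      · rw [hF b c hbc]
      · rw [hF b a hab.symm]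
end

/-- Relations of the positive braid monoid. -/
def PRel (N : ℕ) (x y : FreeMonoid (Fin N)) : Prop :=
  (∃ i j : Fin N, Adj i j ∧ x = .of i * (.of j * .of i) ∧ y = .of j * (.of i * .of j)) ∨
  (∃ i j : Fin N, Far i j ∧ x = .of i * .of j ∧ y = .of j * .of i)

/-- The positive braid monoid. -/
abbrev BM (N : ℕ) := PresentedMonoid (PRel N)

/-- Generators. -/
def gen {N : ℕ} (i : Fin N) : BM N := PresentedMonoid.of (PRel N) i

theorem gen_adj {N : ℕ} {i j : Fin N} (h : Adj i j) (x : BM N) :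
    gen i * (gen j * (gen i * x)) = gen j * (gen i * (gen j * x)) := by
  have : gen i * (gen j * gen i) = gen j * (gen i * gen j) :=
    Quotient.sound (ConGen.Rel.of _ _ (Or.inl ⟨i, j, h, rfl, rfl⟩))
  simpa only [mul_assoc] using congrArg (· * x) this

theorem gen_far {N : ℕ} {i j : Fin N} (h : Far i j) (x : BM N) :
    gen i * (gen j * x) = gen j * (gen i * x) := by
  have : gen i * gen j = gen j * gen i :=
    Quotient.sound (ConGen.Rel.of _ _ (Or.inr ⟨i, j, h, rfl, rfl⟩))
  simpa only [mul_assoc] using congrArg (· * x) this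

/-- length homomorphism -/
def lenHom (N : ℕ) : BM N →* Multiplicative ℕ :=
  PresentedMonoid.lift (fun _ => Multiplicative.ofAdd 1) (by
    rintro x y (⟨i, j, h, rfl, rfl⟩ | ⟨i, j, h, rfl, rfl⟩) <;> simp)

/-- length -/
def len {N : ℕ} (x : BM N) : ℕ := Multiplicative.toAdd (lenHom N x)

theorem len_mul {N : ℕ} (x y : BM N) : len (x * y) = len x + len y := by
  simp [len]
theorem len_one {N : ℕ} : len (1 : BM N) = 0 := by
  simp [len]
theorem len_gen {N : ℕ} (i : Fin N) : len (gen i) = 1 := by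
  simp [len, lenHom, gen]
theorem len_gen_mul {N : ℕ} (i : Fin N) (x : BM N) : len (gen i * x) = len x + 1 := by
  rw [len_mul, len_gen, add_comm]
theorem len_pow {N : ℕ} (x : BM N) (k : ℕ) : len (x ^ k) = k * len x := by
  simp [len]

theorem cases_gen {N : ℕ} (x : BM N) : x = 1 ∨ ∃ i y, x = gen i * y := by
  induction x using PresentedMonoid.inductionOn with
  | h a =>
    induction a using FreeMonoid.casesOn with
    | one => exact Or.inl rfl
    | of_mul i w => exact Or.inr ⟨i, PresentedMonoid.mk _ w, rfl⟩

theorem eq_one_of_len {N : ℕ} (x : BM N) (h : len x = 0) : x = 1 := by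
  rcases cases_gen x with rfl | ⟨i, y, rfl⟩
  · rfl
  · rw [len_gen_mul] at h; omega

theorem word_cons_inj {N : ℕ} {a b : Fin N} {u v : FreeMonoid (Fin N)}
    (h : FreeMonoid.of a * u = FreeMonoid.of b * v) : a = b ∧ u = v :=
  List.cons.inj h

theorem good_aux {N : ℕ} (L : ℕ)
    (hP : ∀ (a b : Fin N) (u v : BM N), len u < L → gen a * u = gen b * v → Good gen a b u v)
    {x y : FreeMonoid (Fin N)} (h : ConGen.Rel (PRel N) x y) :
    PresentedMonoid.mk (PRel N) x = PresentedMonoid.mk (PRel N) y ∧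
    ∀ a u b v, x = .of a * u → y = .of b * v →
      len (PresentedMonoid.mk (PRel N) u) ≤ L →
      Good gen a b (PresentedMonoid.mk (PRel N) u) (PresentedMonoid.mk (PRel N) v) := by
  refine ⟨Quotient.sound h, ?_⟩
  induction h with
  | of x y h =>
    intro a u b v hx hy hL
    rcases h with (⟨i, j, h, rfl, rfl⟩ | ⟨i, j, h, rfl, rfl⟩)
    · obtain ⟨rfl, rfl⟩ := word_cons_inj hx
      obtain ⟨rfl, rfl⟩ := word_cons_inj hy
      exact Good.of_adj (w := 1) h (by rw [mul_one]; rfl) (by rw [mul_one]; rfl)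
    · obtain ⟨rfl, rfl⟩ := word_cons_inj (v := v) hy
      obtain ⟨rfl, rfl⟩ := word_cons_inj (v := u) hx
      exact Good.of_far (w := 1) h (by rw [mul_one]; rfl) (by rw [mul_one]; rfl)
  | refl x =>
    rintro a u b v rfl hy hL
    obtain ⟨rfl, rfl⟩ := word_cons_inj hy
    exact Good.of_eq rfl
  | @symm x y h ih =>
    rintro a u b v rfl rfl hL
    refine (ih _ _ _ _ rfl rfl ?_).symm
    have : gen b * PresentedMonoid.mk (PRel N) v = gen a * PresentedMonoid.mk (PRel N) u :=
      Quotient.sound h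
    have := congrArg len this
    simp only [len_gen_mul] at this
    omega
  | @trans x y z h1 h2 ih1 ih2 =>
    rintro a u c w rfl rfl hL
    have e : gen a * PresentedMonoid.mk (PRel N) u = PresentedMonoid.mk (PRel N) y :=
      Quotient.sound h1
    have e := congrArg len e
    rw [len_gen_mul] at e
    induction y using FreeMonoid.casesOn with
    | one => rw [map_one, len_one] at e; omega
    | of_mul b v =>
      rw [map_mul] at e
      change _ = len (gen b * _) at e
      rw [len_gen_mul] at e
      refine Good.trans (fun a b h x => gen_adj h x) (fun a b h x => gen_far h x) len
        (fun a x => len_gen_mul a x) _ (fun a b u v hu => hP a b u v ?_) rfl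
        (ih1 _ _ _ _ rfl rfl hL) (ih2 _ _ _ _ rfl rfl (by omega))
      omega
  | @mul w x y z h1 h2 ih1 ih2 =>
    intro a u b v hu hv hL
    have e1 : PresentedMonoid.mk (PRel N) w = PresentedMonoid.mk (PRel N) x := Quotient.sound h1
    have e2 : PresentedMonoid.mk (PRel N) y = PresentedMonoid.mk (PRel N) z := Quotient.sound h2
    have e := congrArg len e1
    induction w using FreeMonoid.casesOn with
    | one =>
      induction x using FreeMonoid.casesOn with
      | one => exact ih2 _ _ _ _ (by simpa using hu) (by simpa using hv) hL
      | of_mul c t =>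
        rw [map_mul] at e
        change _ = len (gen c * _) at e
        rw [len_gen_mul, map_one, len_one] at e
        omega
    | of_mul c t =>
      induction x using FreeMonoid.casesOn with
      | one =>
        rw [map_mul] at e
        change len (gen c * _) = _ at e
        rw [len_gen_mul, map_one, len_one] at e
        omega
      | of_mul d r =>
        rw [mul_assoc] at hu hv
        obtain ⟨rfl, rfl⟩ := word_cons_inj hu
        obtain ⟨rfl, rfl⟩ := word_cons_inj hv
        rw [map_mul, len_mul] at hL
        have g := ih1 _ _ _ _ rfl rfl (by omega)
        rw [map_mul, map_mul, ← e2]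
        generalize PresentedMonoid.mk (PRel N) y = Y
        generalize PresentedMonoid.mk (PRel N) t = T at *
        generalize PresentedMonoid.mk (PRel N) r = R at *
        rcases trichotomy c d with rfl | h | h
        · exact Good.of_eq (by rw [g.1 rfl])
        · obtain ⟨w, rfl, rfl⟩ := g.2.1 h
          exact Good.of_adj (w := w * Y) h (by simp only [mul_assoc]) (by simp only [mul_assoc])
        · obtain ⟨w, rfl, rfl⟩ := g.2.2 h
          exact Good.of_far (w := w * Y) h (by simp only [mul_assoc]) (by simp only [mul_assoc])

theorem good_of_eq {N : ℕ} (a b : Fin N) (u v : BM N) (h : gen a * u = gen b * v) :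
    Good gen a b u v := by
  induction hL : len u using Nat.strong_induction_on generalizing a b u v with
  | _ L ih =>
    induction u using PresentedMonoid.inductionOn with
    | h x =>
    induction v using PresentedMonoid.inductionOn with
    | h y =>
    have : ConGen.Rel (PRel N) (.of a * x) (.of b * y) := Quotient.exact h
    exact (good_aux L (fun a b u v hu h => ih _ hu a b u v h rfl) this).2 _ _ _ _ rfl rfl hL.le

theorem gen_cancel {N : ℕ} (a : Fin N) {u v : BM N} (h : gen a * u = gen a * v) : u = v :=
  (good_of_eq _ _ _ _ h).1 rfl

theorem cancel {N : ℕ} (x : BM N) {u v : BM N} (h : x * u = x * v) : u = v := by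
  induction hL : len x generalizing x with
  | zero => rw [eq_one_of_len x hL] at h; simpa using h
  | succ L ih =>
    rcases cases_gen x with rfl | ⟨i, y, rfl⟩
    · rw [len_one] at hL; omega
    · rw [len_gen_mul] at hL
      rw [mul_assoc, mul_assoc] at h
      exact ih y (gen_cancel i h) (by omega)

section words
variable {M : Type*} [Monoid M]

/-- `t (k-1) ⋯ t 0` -/
def Q (t : ℕ → M) : ℕ → M
  | 0 => 1
  | k + 1 => t k * Q t k
/-- `t j ⋯ t 1` -/
def Q' (t : ℕ → M) : ℕ → M
  | 0 => 1
  | k + 1 => t (k + 1) * Q' t k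
/-- Garside element on `k` generators -/
def D (t : ℕ → M) : ℕ → M
  | 0 => 1
  | k + 1 => D t k * Q t (k + 1)
/-- `t 0 ⋯ t (k-1)` -/
def P (t : ℕ → M) : ℕ → M
  | 0 => 1
  | k + 1 => P t k * t k
/-- `t 1 ⋯ t j` -/
def P' (t : ℕ → M) : ℕ → M
  | 0 => 1
  | k + 1 => P' t k * t (k + 1)

/-- The braid relations for the first `N` terms of a sequence. -/
structure IsBraid (N : ℕ) (t : ℕ → M) : Prop where
  braid : ∀ i, i + 1 < N → t i * (t (i + 1) * t i) = t (i + 1) * (t i * t (i + 1))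
  far : ∀ i j, i + 2 ≤ j → j < N → t i * t j = t j * t i

variable {N : ℕ} {t : ℕ → M} (h : IsBraid N t)
include h

theorem Q_comm {i : ℕ} (hi : i < N) : ∀ k, k + 1 ≤ i → t i * Q t k = Q t k * t i
  | 0, _ => by simp [Q]
  | k + 1, hk => by
    rw [Q, mul_assoc, ← Q_comm hi k (by omega), ← mul_assoc, ← mul_assoc, h.far k i hk hi]

theorem D_comm {i : ℕ} (hi : i < N) : ∀ k, k + 1 ≤ i → t i * D t k = D t k * t i
  | 0, _ => by simp [D]
  | k + 1, hk => by
    rw [D, mul_assoc, ← Q_comm h hi (k + 1) hk, ← mul_assoc, D_comm hi k (by omega), mul_assoc]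

theorem Q_shift {i : ℕ} : ∀ K, i + 1 < K → K ≤ N → Q t K * t (i + 1) = t i * Q t K
  | 0, h1, _ => by omega
  | k + 1, h1, h2 => by
    rcases Nat.lt_or_ge (i + 1) k with h3 | h3
    · rw [Q, mul_assoc, Q_shift k h3 (by omega), ← mul_assoc, ← h.far i k h3 (by omega), mul_assoc]
    · obtain rfl : k = i + 1 := by omega
      rw [Q, Q, mul_assoc, mul_assoc, ← Q_comm h (by omega) i (by omega)]
      have := congrArg (· * Q t i) (h.braid i (by omega))
      simp only [mul_assoc] at this
      exact this.symm

theorem Q_Q' {K : ℕ} (hK : K ≤ N) : ∀ j, j < K → Q t K * Q' t j = Q t j * Q t K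
  | 0, _ => by simp [Q, Q']
  | j + 1, hj => by
    rw [Q', ← mul_assoc, Q_shift h K hj hK, mul_assoc, Q_Q' hK j (by omega), Q, mul_assoc]

omit h in
theorem Q_succ : ∀ j, Q t (j + 1) = Q' t j * t 0
  | 0 => by simp [Q, Q']
  | j + 1 => by rw [Q, Q_succ j, Q', mul_assoc]

theorem QQ {k : ℕ} (hk : k + 1 ≤ N) :
    Q t (k + 1) * Q t (k + 1) = Q t k * (Q t (k + 1) * t 0) := by
  conv_lhs => rhs; rw [Q_succ]
  rw [← mul_assoc, Q_Q' h hk k (by omega), mul_assoc]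

theorem D_last : ∀ k, k + 1 ≤ N → t k * D t (k + 1) = D t (k + 1) * t 0
  | 0, _ => by simp [D, Q]
  | j + 1, hj => by
    have e : t (j + 1) * D t j = D t j * t (j + 1) := D_comm h (by omega) j le_rfl
    have e2 := QQ h hj
    rw [D, D, ← mul_assoc, ← mul_assoc, e]
    rw [mul_assoc (D t j) (t (j + 1)) (Q t (j + 1)), ← show Q t (j + 1 + 1) = t (j + 1) * Q t (j + 1) from rfl, mul_assoc, e2]
    simp only [mul_assoc]

theorem D_quasi : ∀ k i j, i + j + 1 = k → k ≤ N → t i * D t k = D t k * t j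
  | 0, i, j, hk, _ => by omega
  | k + 1, i, 0, hk, hN => by
    obtain rfl : i = k := by omega
    exact D_last h _ hN
  | k + 1, i, j + 1, hk, hN => by
    rw [D, ← mul_assoc, D_quasi k i j (by omega) (by omega), mul_assoc, mul_assoc,
      Q_shift h (k + 1) (by omega) hN]

theorem D_div : ∀ k i, i < k → k ≤ N → t i ∣ D t k
  | 0, i, hk, _ => by omega
  | k + 1, i, hk, hN => by
    rcases Nat.lt_or_ge i k with h3 | h3
    · exact (D_div k i h3 (by omega)).mul_right _
    · obtain rfl : i = k := by omega
      cases i with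
      | zero => exact ⟨1, by simp [D, Q]⟩
      | succ j =>
        rw [D, D, mul_assoc, ← Q_Q' h hN (j + 1) (by omega)]
        refine ⟨D t j * Q t (j + 1) * Q' t (j + 1), ?_⟩
        rw [← mul_assoc (t (j + 1)), ← mul_assoc (t (j + 1)), D_comm h (by omega) j le_rfl]
        conv_lhs => rw [Q]
        simp only [mul_assoc]

theorem P_comm {i : ℕ} (hi : i < N) : ∀ k, k + 1 ≤ i → P t k * t i = t i * P t k
  | 0, _ => by simp [P]
  | k + 1, hk => by
    rw [P, mul_assoc, h.far k i hk hi, ← mul_assoc, P_comm hi k (by omega), mul_assoc]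

theorem P_shift {i : ℕ} : ∀ K, i + 1 < K → K ≤ N → P t K * t i = t (i + 1) * P t K
  | 0, h1, _ => by omega
  | k + 1, h1, h2 => by
    rcases Nat.lt_or_ge (i + 1) k with h3 | h3
    · rw [P, mul_assoc, ← h.far i k h3 (by omega), ← mul_assoc, P_shift k h3 (by omega), mul_assoc]
    · obtain rfl : k = i + 1 := by omega
      rw [P, P, mul_assoc, mul_assoc, h.braid i (by omega), ← mul_assoc,
        P_comm h (by omega) i (by omega)]
      simp only [mul_assoc]

theorem P_P' {K : ℕ} (hK : K ≤ N) : ∀ j, j < K → P t K * P t j = P' t j * P t K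
  | 0, _ => by simp [P, P']
  | j + 1, hj => by
    rw [P, ← mul_assoc, P_P' hK j (by omega), mul_assoc, P_shift h K hj hK, P', mul_assoc]

omit h in
theorem P_succ : ∀ j, P t (j + 1) = t 0 * P' t j
  | 0 => by simp [P, P']
  | j + 1 => by rw [P, P_succ j, P', mul_assoc]

theorem PP {k : ℕ} (hk : k + 1 ≤ N) :
    P t (k + 1) ^ 2 * t k = t 0 * P t (k + 1) ^ 2 := by
  have e : P t (k + 1) * P t (k + 1) = P' t k * (P t (k + 1) * t k) := by
    conv_lhs => rhs; rw [P]
    rw [← mul_assoc, P_P' h hk k (by omega), mul_assoc]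
  rw [sq, mul_assoc]
  conv_lhs => lhs; rw [P_succ]
  rw [e, mul_assoc]

theorem P_pow {K : ℕ} (hK : K ≤ N) (i : ℕ) :
    ∀ j, i + j < K → P t K ^ j * t i = t (i + j) * P t K ^ j
  | 0, _ => by simp
  | j + 1, hj => by
    rw [pow_succ', mul_assoc, P_pow hK i j (by omega), ← mul_assoc, P_shift (i := i + j) h K hj hK, mul_assoc]
    rfl

theorem P_central {K i : ℕ} (hi : i < K) (hK : K ≤ N) :
    P t K ^ (K + 1) * t i = t i * P t K ^ (K + 1) := by
  obtain ⟨r, rfl⟩ : ∃ r, K = (i + r) + 1 := ⟨K - 1 - i, by omega⟩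
  have e1 := P_pow h hK i r (by omega)
  have e2 := P_pow h hK 0 i (by omega)
  have e3 := PP h hK
  rw [zero_add] at e2
  generalize P t (i + r + 1) = p at *
  have : p ^ (i + r + 1 + 1) = p ^ i * (p ^ 2 * p ^ r) := by
    rw [← pow_add, ← pow_add]; congr 1; omega
  rw [this]
  calc p ^ i * (p ^ 2 * p ^ r) * t i = p ^ i * (p ^ 2 * (p ^ r * t i)) := by simp only [mul_assoc]
    _ = p ^ i * ((p ^ 2 * t (i + r)) * p ^ r) := by rw [e1]; simp only [mul_assoc]
    _ = (p ^ i * t 0) * (p ^ 2 * p ^ r) := by rw [e3]; simp only [mul_assoc]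
    _ = _ := by rw [e2, mul_assoc]
end words

/-- ℕ-indexed generators. -/
def tg (N k : ℕ) : BM N := if h : k < N then gen ⟨k, h⟩ else 1

theorem tg_of_lt {N k : ℕ} (h : k < N) : tg N k = gen ⟨k, h⟩ := dif_pos h
theorem tg_fin {N : ℕ} (i : Fin N) : tg N i = gen i := dif_pos i.2

theorem tg_isBraid (N : ℕ) : IsBraid N (tg N) := by
  refine ⟨fun i hi => ?_, fun i j hij hj => ?_⟩
  · have := gen_adj (i := (⟨i, by omega⟩ : Fin N)) (j := ⟨i + 1, hi⟩) (Or.inl rfl) 1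
    rw [tg_of_lt hi, tg_of_lt (show i < N by omega)]
    simpa only [mul_one] using this
  · have := gen_far (i := (⟨i, by omega⟩ : Fin N)) (j := ⟨j, hj⟩) (Or.inl hij) 1
    rw [tg_of_lt hj, tg_of_lt (show i < N by omega)]
    simpa only [mul_one] using this

theorem tg_cancel {N k : ℕ} {u v : BM N} (h : tg N k * u = tg N k * v) : u = v := cancel _ h

theorem tg_far {N i j : ℕ} (hij : i + 2 ≤ j) (hj : j < N) {u v : BM N}
    (h : tg N i * u = tg N j * v) : ∃ w, u = tg N j * w ∧ v = tg N i * w := by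
  rw [tg_of_lt hj, tg_of_lt (show i < N by omega)] at *
  exact (good_of_eq _ _ _ _ h).2.2 (Or.inl hij)

theorem tg_adj {N i j : ℕ} (hij : i + 1 = j ∨ j + 1 = i) (hi : i < N) (hj : j < N) {u v : BM N}
    (h : tg N i * u = tg N j * v) :
    ∃ w, u = tg N j * (tg N i * w) ∧ v = tg N i * (tg N j * w) := by
  rw [tg_of_lt hj, tg_of_lt hi] at *
  exact (good_of_eq _ _ _ _ h).2.1 hij

theorem far_div_Q {N k : ℕ} (hk : k < N) (y : BM N) :
    ∀ j, j + 1 ≤ k → tg N k ∣ Q (tg N) j * y → tg N k ∣ y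
  | 0, _, h => by simpa [Q] using h
  | j + 1, hj, ⟨z, hz⟩ => by
    rw [Q, mul_assoc] at hz
    obtain ⟨w, hw, _⟩ := tg_far hj hk hz
    exact far_div_Q hk y j (by omega) ⟨w, hw⟩

theorem far_div_D {N k : ℕ} (hk : k < N) :
    ∀ j, j + 1 ≤ k → ∀ y : BM N, tg N k ∣ D (tg N) j * y → tg N k ∣ y
  | 0, _, y, h => by simpa [D] using h
  | j + 1, hj, y, h => by
    rw [D, mul_assoc] at h
    exact far_div_Q hk y _ hj (far_div_D hk j (by omega) _ h)

theorem Q_key {N : ℕ} : ∀ k, k < N → ∀ y : BM N, tg N k ∣ Q (tg N) k * y → Q (tg N) (k + 1) ∣ y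
  | 0, _, y, h => by simpa [Q] using h
  | k + 1, hk, y, ⟨z, hz⟩ => by
    rw [Q, mul_assoc] at hz
    obtain ⟨w, hw, _⟩ := tg_adj (Or.inl rfl) (by omega) hk hz
    obtain ⟨y, rfl⟩ := far_div_Q hk y k (by omega) ⟨_, hw⟩
    rw [← mul_assoc, ← Q_comm (tg_isBraid N) hk k (by omega), mul_assoc] at hw
    obtain ⟨y, rfl⟩ := Q_key k (by omega) y ⟨w, tg_cancel hw⟩
    exact ⟨y, by rw [show Q (tg N) (k + 1 + 1) = tg N (k + 1) * Q (tg N) (k + 1) from rfl, mul_assoc]⟩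

theorem D_dvd {N : ℕ} (m : BM N) : ∀ k, k ≤ N → (∀ i, i < k → tg N i ∣ m) → D (tg N) k ∣ m
  | 0, _, _ => by simp [D]
  | k + 1, hk, h => by
    obtain ⟨y, rfl⟩ := D_dvd m k (by omega) fun i hi => h i (by omega)
    have h1 := h k (by omega)
    rw [D]
    refine mul_dvd_mul_left _ (Q_key k hk y ?_)
    cases k with
    | zero => simpa [D, Q] using h1
    | succ j =>
      rw [D, mul_assoc] at h1
      exact far_div_D hk j le_rfl _ h1

theorem len_tg {N k : ℕ} (h : k < N) : len (tg N k) = 1 := by rw [tg_of_lt h, len_gen]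

theorem len_Q {N : ℕ} : ∀ k, k ≤ N → len (Q (tg N) k) = k
  | 0, _ => len_one
  | k + 1, h => by rw [Q, len_mul, len_tg h, len_Q k (by omega), add_comm]

theorem len_P {N : ℕ} : ∀ k, k ≤ N → len (P (tg N) k) = k
  | 0, _ => len_one
  | k + 1, h => by rw [P, len_mul, len_tg h, len_P k (by omega)]

theorem len_D {N : ℕ} : ∀ k, k ≤ N → 2 * len (D (tg N) k) = k * (k + 1)
  | 0, _ => by rw [D, len_one]
  | k + 1, h => by
    rw [D, len_mul, len_Q _ h, mul_add, len_D k (by omega)]; ring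

/-- quasi-central elements -/
theorem quasi_div {N : ℕ} (m : BM N) (f : ℕ → ℕ)
    (hf : ∀ i, i < N → tg N i * m = m * tg N (f i)) (hm : m ≠ 1) : D (tg N) N ∣ m := by
  have step : ∀ i j, (i + 1 = j ∨ j + 1 = i) → i < N → j < N → tg N i ∣ m → tg N j ∣ m := by
    rintro i j hij hi hj ⟨x, hx⟩
    have h1 := hf j hj
    conv_rhs at h1 => rw [hx, mul_assoc]
    obtain ⟨w, _, hw⟩ := tg_adj hij hi hj h1.symm
    have h2 := hf i hi
    conv_rhs at h2 => rw [hw, mul_assoc]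
    have h3 := tg_cancel h2
    rw [mul_assoc] at h3
    exact ⟨_, h3⟩
  obtain ⟨i, y, rfl⟩ := (cases_gen m).resolve_left hm
  have hi : tg N i ∣ gen i * y := ⟨y, by rw [tg_fin]⟩
  have down : ∀ k, k ≤ (i : ℕ) → tg N (i - k) ∣ gen i * y := by
    intro k
    induction k with
    | zero => intro _; exact hi
    | succ k ih =>
      intro hk
      exact step (i - k) _ (by omega) (by omega) (by omega) (ih (by omega))
  have up : ∀ k, tg N k ∣ gen i * y ∨ N ≤ k := by
    intro k
    induction k with
    | zero => left; simpa using down i le_rfl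
    | succ k ih =>
      rcases Nat.lt_or_ge (k + 1) N with h | h
      · exact Or.inl (step k _ (Or.inl rfl) (by omega) h (ih.resolve_right (by omega)))
      · exact Or.inr h
  exact D_dvd _ N le_rfl fun k hk => (up k).resolve_right (by omega)

theorem quasi_pow {N : ℕ} (m : BM N) (f : ℕ → ℕ)
    (hf : ∀ i, i < N → tg N i * m = m * tg N (f i)) : ∃ k, m = D (tg N) N ^ k := by
  induction hL : len m using Nat.strong_induction_on generalizing m f with
  | _ L ih =>
    by_cases hm : m = 1
    · exact ⟨0, by simpa using hm⟩
    obtain ⟨m', rfl⟩ := quasi_div m f hf hm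
    have hN : 0 < N := by
      obtain ⟨i, _, _⟩ := (cases_gen _).resolve_left hm
      exact i.pos
    have hD := len_D N le_rfl
    have hpos : 0 < N * (N + 1) := by positivity
    rw [len_mul] at hL
    obtain ⟨k, rfl⟩ := ih (len m') (by omega) m' (fun j => f (N - 1 - j)) (fun j hj => by
      have h1 := hf (N - 1 - j) (by omega)
      rw [← mul_assoc, D_quasi (tg_isBraid N) N (N - 1 - j) j (by omega) le_rfl, mul_assoc,
        mul_assoc] at h1
      exact cancel _ h1) rfl
    exact ⟨k + 1, by rw [pow_succ']⟩

theorem P_eq_D {N : ℕ} (hN : 0 < N) : P (tg N) N ^ (N + 1) = D (tg N) N ^ 2 := by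
  obtain ⟨k, hk⟩ := quasi_pow (P (tg N) N ^ (N + 1)) id
    (fun i hi => (P_central (tg_isBraid N) hi le_rfl).symm)
  have h1 := congrArg len hk
  rw [len_pow, len_pow, len_P N le_rfl] at h1
  have hD := len_D N le_rfl
  have hpos : 0 < N * (N + 1) := by positivity
  have : k = 2 := by
    have : (N * (N + 1)) * k = (N * (N + 1)) * 2 := by
      rw [← hD]; nlinarith
    exact Nat.eq_of_mul_eq_mul_left hpos this
  rw [hk, this]

theorem odd_not_central {N : ℕ} (hN : 2 ≤ N) (r : ℕ)
    (h : ∀ i, i < N → tg N i * D (tg N) N ^ (2 * r + 1) = D (tg N) N ^ (2 * r + 1) * tg N i) :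
    False := by
  have h1 : ∀ i, i < N → tg N i * D (tg N) N ^ (2 * r) = D (tg N) N ^ (2 * r) * tg N i := by
    intro i hi
    rw [pow_mul, ← P_eq_D (by omega)]
    exact (Commute.pow_left (P_central (tg_isBraid N) hi le_rfl) r).symm
  have h2 := h 0 (by omega)
  rw [pow_succ, ← mul_assoc, h1 0 (by omega), mul_assoc, mul_assoc,
    D_quasi (tg_isBraid N) N 0 (N - 1) (by omega) le_rfl] at h2
  have h3 := cancel _ (cancel _ h2)
  rw [tg_of_lt (show N - 1 < N by omega), tg_of_lt (show 0 < N by omega)] at h3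
  have g := good_of_eq _ _ 1 1 (congrArg (· * 1) h3)
  rcases trichotomy (⟨N - 1, by omega⟩ : Fin N) ⟨0, by omega⟩ with e | e | e
  · rw [Fin.ext_iff] at e; simp at e; omega
  · obtain ⟨w, hw, _⟩ := g.2.1 e
    have := congrArg len hw
    rw [len_gen_mul, len_one] at this; omega
  · obtain ⟨w, hw, _⟩ := g.2.2 e
    have := congrArg len hw
    rw [len_gen_mul, len_one] at this; omega

/-- The canonical map from the positive monoid to the braid group. -/
def phi (n : ℕ) : BM (n - 1) →* BraidGroup n :=
  PresentedMonoid.lift (fun i => PresentedGroup.of i) (by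
    have key1 : ∀ i j : Fin (n - 1), (i : ℕ) + 1 = j →
        (PresentedGroup.of i : BraidGroup n) * (.of j * .of i) = .of j * (.of i * .of j) := by
      intro i j hij
      have := PresentedGroup.mk_eq_mk_of_mul_inv_mem (rels := braidRels n)
        (Or.inl ⟨i, j, hij, rfl⟩)
      simp only [map_mul, mul_assoc] at this
      exact this
    have key2 : ∀ i j : Fin (n - 1), (i : ℕ) + 2 ≤ j →
        (PresentedGroup.of i : BraidGroup n) * .of j = .of j * .of i := by
      intro i j hij
      have := PresentedGroup.mk_eq_mk_of_mul_inv_mem (rels := braidRels n)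
        (Or.inr ⟨i, j, hij, rfl⟩)
      simp only [map_mul, mul_assoc] at this
      exact this
    rintro x y (⟨i, j, h | h, rfl, rfl⟩ | ⟨i, j, h | h, rfl, rfl⟩)
    · simpa using key1 i j h
    · simpa using (key1 j i h).symm
    · simpa using key2 i j h
    · simpa using (key2 j i h).symm)

theorem phi_gen (n : ℕ) (i : Fin (n - 1)) : phi n (gen i) = PresentedGroup.of i := rfl

theorem phi_tg (n k : ℕ) : phi n (tg (n - 1) k) = braidSigma n (k + 1) := by
  unfold tg braidSigma
  simp only [Nat.add_sub_cancel]
  split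
  · rfl
  · simp

/-- Full twist in the monoid -/
def Z (N : ℕ) : BM N := D (tg N) N ^ 2

theorem Z_comm_tg {N i : ℕ} (hi : i < N) : tg N i * Z N = Z N * tg N i := by
  rw [Z, ← P_eq_D (by omega)]
  exact (P_central (tg_isBraid N) hi le_rfl).symm

theorem Z_comm {N : ℕ} (x : BM N) : Commute (Z N) x := by
  induction hL : len x generalizing x with
  | zero => rw [eq_one_of_len x hL]; exact Commute.one_right _
  | succ L ih =>
    rcases cases_gen x with rfl | ⟨i, y, rfl⟩
    · exact Commute.one_right _
    · rw [len_gen_mul] at hL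
      refine Commute.mul_right ?_ (ih y (by omega))
      rw [← tg_fin]
      exact (Z_comm_tg i.2).symm

theorem Z_div {N : ℕ} (i : Fin N) : ∃ x, gen i * x = Z N := by
  obtain ⟨x, hx⟩ := (D_div (tg_isBraid N) N i i.2 le_rfl).mul_right (D (tg N) N)
  exact ⟨x, by rw [Z, sq, hx, tg_fin]⟩

theorem Z_div' {N : ℕ} {i : Fin N} {x : BM N} (h : gen i * x = Z N) : x * gen i = Z N := by
  apply gen_cancel i
  rw [← mul_assoc, h]
  exact Z_comm _

instance oreZ (N : ℕ) : OreLocalization.OreSet (Submonoid.powers (Z N)) where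
  ore_right_cancel r₁ r₂ s hs := by
    obtain ⟨_, k, rfl⟩ := s
    refine ⟨⟨_, k, rfl⟩, ?_⟩
    have c : ∀ r, Z N ^ k * r = r * Z N ^ k := fun r => (Z_comm r).pow_left k
    change r₁ * Z N ^ k = r₂ * Z N ^ k at hs
    change Z N ^ k * r₁ = Z N ^ k * r₂
    rw [c, c, hs]
  oreNum r _ := r
  oreDenom _ s := s
  ore_eq r s := by
    obtain ⟨_, k, rfl⟩ := s
    exact (Z_comm r).pow_left k

/-- The localization at the full twist -/
abbrev Loc (N : ℕ) := OreLocalization (Submonoid.powers (Z N)) (BM N)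

/-- numerator map -/
def num (N : ℕ) : BM N →* Loc N := OreLocalization.numeratorHom

theorem num_inj (N : ℕ) : Function.Injective (num N) := by
  intro x y h
  change OreLocalization.numeratorHom x = OreLocalization.numeratorHom y at h
  rw [OreLocalization.numeratorHom_apply, OreLocalization.numeratorHom_apply,
    OreLocalization.oreDiv_eq_iff] at h
  obtain ⟨u, v, h1, h2⟩ := h
  simp only [OneMemClass.coe_one, mul_one] at h2
  simp only [Submonoid.smul_def, smul_eq_mul] at h1
  rw [← h2] at h1
  exact (cancel _ h1).symm

theorem num_gen_isUnit {N : ℕ} (i : Fin N) : IsUnit (num N (gen i)) := by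
  obtain ⟨x, hx⟩ := Z_div i
  have hZ : IsUnit (num N (Z N)) :=
    OreLocalization.numerator_isUnit (⟨Z N, Submonoid.mem_powers _⟩ : Submonoid.powers (Z N))
  have e1 := (congrArg (num N) hx).symm
  have e2 := (congrArg (num N) (Z_div' hx)).symm
  have h1 := e1 ▸ hZ
  have h2 := e2 ▸ hZ
  rw [map_mul] at h1 h2
  rw [isUnit_iff_exists_and_exists]
  obtain ⟨z, hz1, hz2⟩ := isUnit_iff_exists.1 h1
  obtain ⟨z', hz1', hz2'⟩ := isUnit_iff_exists.1 h2
  exact ⟨⟨_, by rw [← hz1, mul_assoc]⟩, ⟨_, by rw [← hz2', ← mul_assoc]⟩⟩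

/-- The map from the braid group to the units of the localization -/
noncomputable def psi (n : ℕ) : BraidGroup n →* (Loc (n - 1))ˣ :=
  PresentedGroup.toGroup (rels := braidRels n) (f := fun i => (num_gen_isUnit i).unit) (by
    rintro r (⟨i, j, h, rfl⟩ | ⟨i, j, h, rfl⟩)
    · simp only [map_mul, map_inv, FreeGroup.lift_apply_of]
      rw [mul_inv_eq_one]
      ext
      have := gen_adj (i := i) (j := j) (Or.inl h) 1
      simp only [mul_one] at this
      simp only [Units.val_mul, IsUnit.unit_spec, ← map_mul, mul_assoc, this]
    · simp only [map_mul, map_inv, FreeGroup.lift_apply_of]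
      rw [mul_inv_eq_one]
      ext
      have := gen_far (i := i) (j := j) (Or.inl h) 1
      simp only [mul_one] at this
      simp only [Units.val_mul, IsUnit.unit_spec, ← map_mul, this])

theorem psi_phi (n : ℕ) (x : BM (n - 1)) : (psi n (phi n x) : Loc (n - 1)) = num _ x := by
  have : (Units.coeHom _).comp ((psi n).comp (phi n)) = num (n - 1) := by
    apply PresentedMonoid.ext
    intro i
    change ((psi n (PresentedGroup.of i) : (Loc (n - 1))ˣ) : Loc (n - 1)) = _
    rw [psi, PresentedGroup.toGroup.of]
    rfl
  exact DFunLike.congr_fun this x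

theorem phi_inj (n : ℕ) : Function.Injective (phi n) := by
  intro x y h
  apply num_inj
  rw [← psi_phi, ← psi_phi, h]

theorem commute_all {n : ℕ} {z : BraidGroup n}
    (h : ∀ i : Fin (n - 1), z * PresentedGroup.of i = PresentedGroup.of i * z) :
    z ∈ Subgroup.center (BraidGroup n) := by
  have : ∀ g, g ∈ Subgroup.centralizer {z} := by
    intro g
    apply PresentedGroup.generated_by
    intro i
    rw [Subgroup.mem_centralizer_singleton_iff]
    exact (h i).symm
  rw [Subgroup.mem_center_iff]
  intro g
  exact Subgroup.mem_centralizer_singleton_iff.1 (this g)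

theorem phi_Z_center (n : ℕ) : phi n (Z (n - 1)) ∈ Subgroup.center (BraidGroup n) := by
  apply commute_all
  intro i
  rw [← phi_gen, ← map_mul, ← map_mul, (Z_comm _).eq]

theorem fraction (n : ℕ) (g : BraidGroup n) :
    ∃ (k : ℕ) (m : BM (n - 1)), phi n (Z (n - 1)) ^ k * g = phi n m := by
  have hg : g ∈ Subgroup.closure (Set.range (PresentedGroup.of (rels := braidRels n))) := by
    rw [PresentedGroup.closure_range_of]; trivial
  induction hg using Subgroup.closure_induction'' with
  | one => exact ⟨0, 1, by simp⟩
  | mem x hx =>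
    obtain ⟨i, rfl⟩ := hx
    exact ⟨0, gen i, by simp [phi_gen]⟩
  | inv_mem x hx =>
    obtain ⟨i, rfl⟩ := hx
    obtain ⟨y, hy⟩ := Z_div i
    refine ⟨1, y, ?_⟩
    rw [pow_one, ← Z_div' hy, map_mul, phi_gen, mul_inv_cancel_right]
  | mul x y _ _ ihx ihy =>
    obtain ⟨k, m, h1⟩ := ihx
    obtain ⟨l, m', h2⟩ := ihy
    refine ⟨k + l, m * m', ?_⟩
    have c := Subgroup.mem_center_iff.1 (Subgroup.pow_mem _ (phi_Z_center n) l) x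
    rw [map_mul, ← h1, ← h2, pow_add]
    simp only [mul_assoc]
    rw [← mul_assoc x, c, mul_assoc]

theorem prod_eq_P (n k : ℕ) :
    ((List.range k).map (fun t => braidSigma n (t + 1))).prod = phi n (P (tg (n - 1)) k) := by
  induction k with
  | zero => simp [P]
  | succ k ih => rw [List.range_succ, List.map_append, List.prod_append, ih, P, map_mul, phi_tg]; simp

theorem twist_eq (n : ℕ) (hn : 3 ≤ n) :
    (((List.range (n - 1)).map (fun t => braidSigma n (t + 1))).prod) ^ n =
      phi n (Z (n - 1)) := by
  rw [prod_eq_P, Z, ← P_eq_D (by omega), map_pow]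
  congr 1
  omega

end BraidCenter

open BraidCenter in
/-- For `n ≥ 3`, the center of the braid group `B_n` is the subgroup generated by
the full twist `(σ_1 σ_2 ⋯ σ_{n-1})^n`, and this subgroup is infinite cyclic. -/
theorem braid_center_full_twist (n : ℕ) (hn : 3 ≤ n) :
    Subgroup.center (BraidGroup n) =
      Subgroup.zpowers ((((List.range (n - 1)).map
        (fun t => braidSigma n (t + 1))).prod) ^ n) ∧
    Infinite (Subgroup.zpowers ((((List.range (n - 1)).map
        (fun t => braidSigma n (t + 1))).prod) ^ n)) ∧
    IsCyclic (Subgroup.zpowers ((((List.range (n - 1)).map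
        (fun t => braidSigma n (t + 1))).prod) ^ n)) := by
  rw [twist_eq n hn]
  refine ⟨le_antisymm ?_ ?_, ?_, inferInstance⟩
  · intro g hg
    obtain ⟨k, m, hm⟩ := fraction n g
    have hmc : phi n m ∈ Subgroup.center (BraidGroup n) := by
      rw [← hm]; exact Subgroup.mul_mem _ (Subgroup.pow_mem _ (phi_Z_center n) k) hg
    have hc : ∀ i, i < n - 1 → tg (n - 1) i * m = m * tg (n - 1) (id i) := by
      intro i _
      apply phi_inj
      rw [map_mul, map_mul]
      exact Subgroup.mem_center_iff.1 hmc _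
    obtain ⟨l, rfl⟩ := quasi_pow m id hc
    rcases Nat.even_or_odd' l with ⟨r, rfl | rfl⟩
    · rw [pow_mul, ← Z, map_pow] at hm
      have : g = (phi n (Z (n - 1)) ^ k)⁻¹ * phi n (Z (n - 1)) ^ r := by rw [← hm]; simp
      rw [this]
      exact Subgroup.mul_mem _ (Subgroup.inv_mem _ (Subgroup.npow_mem_zpowers _ _))
        (Subgroup.npow_mem_zpowers _ _)
    · exact (odd_not_central (by omega) r hc).elim
  · rw [Subgroup.zpowers_le]; exact phi_Z_center n
  · have : ¬ IsOfFinOrder (phi n (Z (n - 1))) := by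
      rw [isOfFinOrder_iff_pow_eq_one]
      rintro ⟨k, hk, h⟩
      rw [← map_pow, ← map_one (phi n)] at h
      have h1 := congrArg len (phi_inj n h)
      rw [len_pow, Z, len_pow, len_D _ le_rfl, len_one] at h1
      have : 0 < k * ((n - 1) * (n - 1 + 1)) :=
        Nat.mul_pos hk (Nat.mul_pos (by omega) (by omega))
      omega
    exact (infinite_zpowers.2 this).to_subtype
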